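/- arXiv:2604.21703 — 2 statements merged into one kernel-verified Lean document; each statement's English description precedes it below -/
import Mathlib

section
/- Let F be a finite field of odd cardinality q and characteristic p, let ψ : F → ℂ a nontrivial additive character, n ≥ 1, and suppose the symmetric invertible matrix J ∈ M_{2n}(F) satisfies χ((−1)^n · det J) = −1, where χ is the quadratic character of F (so J defines a non-split quadratic form in 2n variables). Let so_J(2n,F) = {X ∈ M_{2n}(F) : Xᵗ J + J X = 0}, an F-vector space of dimension n(2n−1). Then q^{-n(2n−1)/2} ∑_{X ∈ so_J(2n,F)} ψ(tr(X²)/2) = −ε(ψ)^n, where ε(ψ) = q^{-1/2} ∑_{x ∈ F} ψ(x²). (This is the Weil index γ(spin_{F_{q²}/F_q}(2n)) = −ε(ψ)^n of the quasi-split non-split even orthogonal Lie algebra with the trace pairing.) -/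
open Finset Matrix

/-!
Right multiplication by `J` carries the skew-symmetric matrices onto the orthogonal Lie algebra of
`J` and turns the trace form into `A ↦ tr((AJ)²) / 2`, whose Gauss sum depends only on the
congruence class of `J`. For `J = diag(d₁, …, d_N)` this form is diagonal in the entries above the
diagonal, with weights `-dᵢdⱼ`, so the sum is a product of `N(N-1)/2` one-variable Gauss sums, and
each `dᵢ` occurs in `N - 1` of the weights. When `N = 2n` the exponent `N - 1` is odd, which leaves
`χ(det J)`; and since `χ(-1) ε(ψ)` is a fourth root of unity and `n(2n-1) ≡ n` modulo `4`, the
remaining power collapses to `(χ(-1) ε(ψ))ⁿ`.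
-/

section OrderedPairs

variable {ι : Type*} [Fintype ι] [LinearOrder ι]

lemma card_lt_pairs : Fintype.card {p : ι × ι // p.1 < p.2} = (Fintype.card ι).choose 2 := by
  rw [Fintype.card_subtype, ← univ_product_univ, card_product_filter_lt, card_univ]

variable {M : Type*} [CommMonoid M]

@[to_additive]
lemma prod_lt_mul_swap (f : ι → ι → M) :
    ∏ p : {p : ι × ι // p.1 < p.2}, f p.1.1 p.1.2 * f p.1.2 p.1.1 =
      ∏ p ∈ univ.offDiag, f p.1 p.2 := by
  have hswap : ∏ p : ι × ι with p.1 < p.2, f p.2 p.1 = ∏ p : ι × ι with p.2 < p.1, f p.1 p.2 :=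
    prod_equiv (Equiv.prodComm ι ι) (by simp) (by simp)
  have hunion : (univ : Finset ι).offDiag =
      ({p | p.1 < p.2} : Finset (ι × ι)) ∪ ({p | p.2 < p.1} : Finset (ι × ι)) := by
    ext; simp
  have hdisj : Disjoint (α := Finset (ι × ι)) {p | p.1 < p.2} {p | p.2 < p.1} :=
    disjoint_filter.2 fun _ _ ↦ lt_asymm
  rw [hunion, prod_union hdisj, ← hswap, ← prod_mul_distrib]
  exact (prod_subtype _ (by simp) fun p : ι × ι ↦ f p.1 p.2 * f p.2 p.1).symm

lemma prod_lt_mul (d : ι → M) :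
    ∏ p : {p : ι × ι // p.1 < p.2}, d p.1.1 * d p.1.2 = (∏ i, d i) ^ (Fintype.card ι - 1) := by
  rw [prod_lt_mul_swap fun i _ ↦ d i,
    prod_finset_product _ univ (fun i ↦ {i}ᶜ) (by simp [ne_comm])]
  simp [card_compl, prod_pow]

end OrderedPairs

section GaussSums

lemma intCast_quadraticChar_sq {F : Type*} (R : Type*) [Field F] [Fintype F] [DecidableEq F]
    [Ring R] {a : F} (ha : a ≠ 0) : ((quadraticChar F a : ℤ) : R) ^ 2 = 1 := by
  rw [← Int.cast_pow, quadraticChar_sq_one ha, Int.cast_one]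

variable {F R : Type*} [Field F] [Fintype F] [DecidableEq F] [CommRing R] [IsDomain R]
  {ψ : AddChar F R}

lemma sum_addChar_sq_eq_gaussSum (hF : ringChar F ≠ 2) (hψ : ψ ≠ 1) :
    ∑ x, ψ (x ^ 2) = gaussSum ((quadraticChar F).ringHomComp (Int.castRingHom R)) ψ := by
  have hfiber (y : F) : ∑ x with x ^ 2 = y, ψ (x ^ 2) = (quadraticChar F y + 1 : R) * ψ y := by
    have hcard : (#{x | x ^ 2 = y} : ℤ) = quadraticChar F y + 1 := by
      simpa using quadraticChar_card_sqrts hF y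
    rw [sum_congr rfl fun x hx ↦ by rw [(mem_filter.1 hx).2], sum_const, nsmul_eq_mul]
    exact_mod_cast congrArg (fun k : ℤ ↦ (k : R) * ψ y) hcard
  rw [← sum_fiberwise univ (fun x : F ↦ x ^ 2)]
  simp [hfiber, add_mul, sum_add_distrib, AddChar.sum_eq_zero_of_ne_one hψ, gaussSum]

lemma sum_addChar_mul_sq (hF : ringChar F ≠ 2) (hψ : ψ ≠ 1) {a : F} (ha : a ≠ 0) :
    ∑ x, ψ (a * x ^ 2) = quadraticChar F a * ∑ x, ψ (x ^ 2) := by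
  have hψa : ψ.mulShift a ≠ 1 := (ψ.mulShift_unit_eq_one_iff ha.isUnit).not.2 hψ
  have hshift := gaussSum_mulShift ((quadraticChar F).ringHomComp (Int.castRingHom R)) ψ
    (Units.mk0 a ha)
  calc ∑ x, ψ (a * x ^ 2) = gaussSum _ (ψ.mulShift a) := sum_addChar_sq_eq_gaussSum hF hψa
    _ = quadraticChar F a * gaussSum _ ψ := by
      rw [← hshift, ← mul_assoc, MulChar.ringHomComp_apply, Units.val_mk0, eq_intCast, ← sq,
        intCast_quadraticChar_sq R ha, one_mul]
    _ = _ := by rw [sum_addChar_sq_eq_gaussSum hF hψ]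

lemma sum_addChar_sq_sq (hF : ringChar F ≠ 2) (hR : ringChar R ≠ 2) (hψ : ψ ≠ 1) :
    (∑ x, ψ (x ^ 2)) ^ 2 = quadraticChar F (-1) * Fintype.card F := by
  have hχ : (quadraticChar F).ringHomComp (Int.castRingHom R) ≠ 1 := by
    obtain ⟨a, ha⟩ := quadraticChar_exists_neg_one' hF
    refine MulChar.ne_one_iff.2 ⟨a, ?_⟩
    simpa [ha, -quadraticChar_apply] using Ring.neg_one_ne_one_of_char_ne_two hR
  rw [sum_addChar_sq_eq_gaussSum hF hψ,
    gaussSum_sq hχ ((quadraticChar_isQuadratic F).comp _) (.of_ne_one hψ)]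
  simp

lemma sum_addChar_weightedSumSquares {κ : Type*} [Fintype κ] [DecidableEq κ]
    (hF : ringChar F ≠ 2) (hψ : ψ ≠ 1) {w : κ → F} (hw : ∀ k, w k ≠ 0) :
    ∑ x : κ → F, ψ (∑ k, w k * x k ^ 2) =
      quadraticChar F (∏ k, w k) * (∑ x, ψ (x ^ 2)) ^ Fintype.card κ := by
  have hψsum (x : κ → F) : ψ (∑ k, w k * x k ^ 2) = ∏ k, ψ (w k * x k ^ 2) := by
    simpa [← ofAdd_sum] using
      map_prod ψ.toMonoidHom (fun k ↦ Multiplicative.ofAdd (w k * x k ^ 2)) univ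
  calc ∑ x : κ → F, ψ (∑ k, w k * x k ^ 2)
      = ∏ k, ∑ t, ψ (w k * t ^ 2) := by simp_rw [hψsum, Fintype.prod_sum]
    _ = _ := by simp [sum_addChar_mul_sq hF hψ (hw _), prod_mul_distrib]

end GaussSums

section SkewMatrices

variable {ι R : Type*} [CommRing R]

lemma transpose_mul_add_mul_eq_zero_iff [Fintype ι] [DecidableEq ι] {J : Matrix ι ι R}
    (hJsymm : J.IsSymm) (hJ : IsUnit J) (A : Matrix ι ι R) :
    (A * J)ᵀ * J + J * (A * J) = 0 ↔ Aᵀ = -A := by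
  have hfactor : (A * J)ᵀ * J + J * (A * J) = J * (Aᵀ + A) * J := by
    rw [transpose_mul, hJsymm.eq]
    noncomm_ring
  rw [hfactor, hJ.mul_left_eq_zero, hJ.mul_right_eq_zero, eq_neg_iff_add_eq_zero]

lemma transpose_mul_mul_transpose_eq_neg_iff [Fintype ι] [DecidableEq ι] {P : Matrix ι ι R}
    (hP : IsUnit P) (A : Matrix ι ι R) : (P * A * Pᵀ)ᵀ = -(P * A * Pᵀ) ↔ Aᵀ = -A := by
  have hfactor : (P * A * Pᵀ)ᵀ + P * A * Pᵀ = P * (Aᵀ + A) * Pᵀ := by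
    simp only [transpose_mul, transpose_transpose]
    noncomm_ring
  rw [eq_neg_iff_add_eq_zero, hfactor, (P.isUnit_transpose.2 hP).mul_left_eq_zero,
    hP.mul_right_eq_zero, eq_neg_iff_add_eq_zero]

variable [LinearOrder ι]

/-- The skew-symmetric matrix with prescribed entries above the diagonal. -/
def skewOfUpper (a : {p : ι × ι // p.1 < p.2} → R) : Matrix ι ι R :=
  of fun i j ↦ if h : i < j then a ⟨(i, j), h⟩ else if h : j < i then -a ⟨(j, i), h⟩ else 0

lemma skewOfUpper_apply_of_lt (a : {p : ι × ι // p.1 < p.2} → R) {i j : ι} (h : i < j) :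
    skewOfUpper a i j = a ⟨(i, j), h⟩ := by
  simp [skewOfUpper, h]

lemma skewOfUpper_apply_self (a : {p : ι × ι // p.1 < p.2} → R) (i : ι) :
    skewOfUpper a i i = 0 := by
  simp [skewOfUpper]

lemma transpose_skewOfUpper (a : {p : ι × ι // p.1 < p.2} → R) :
    (skewOfUpper a)ᵀ = -skewOfUpper a := by
  ext i j
  rcases lt_trichotomy i j with h | rfl | h <;> simp [skewOfUpper, *, not_lt_of_gt]

/-- The entries above the diagonal as coordinates on the skew-symmetric matrices. -/
def skewEquiv [NoZeroDivisors R] (h2 : (2 : R) ≠ 0) :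
    ({p : ι × ι // p.1 < p.2} → R) ≃ {A : Matrix ι ι R // Aᵀ = -A} where
  toFun a := ⟨skewOfUpper a, transpose_skewOfUpper a⟩
  invFun A p := A.1 p.1.1 p.1.2
  left_inv a := funext fun p ↦ skewOfUpper_apply_of_lt a p.2
  right_inv := by
    rintro ⟨A, hA⟩
    have hskew (i j : ι) : A j i = -A i j := congrFun₂ hA i j
    ext i j
    rcases lt_trichotomy i j with h | rfl | h
    · simp [skewOfUpper, h]
    · have : 2 * A i i = 0 := by linear_combination hskew i i
      simpa [skewOfUpper, h2, eq_comm] using this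
    · simp [skewOfUpper, h, h.not_gt, hskew j i]

lemma trace_sq_skewOfUpper_mul_diagonal [Fintype ι] (a : {p : ι × ι // p.1 < p.2} → R)
    (d : ι → R) :
    (skewOfUpper a * diagonal d * (skewOfUpper a * diagonal d)).trace =
      2 * ∑ p : {p : ι × ι // p.1 < p.2}, -(d p.1.1 * d p.1.2) * a p ^ 2 := by
  set B := skewOfUpper a * diagonal d with hB
  have hskew (i j : ι) : skewOfUpper a j i = -skewOfUpper a i j :=
    congrFun₂ (transpose_skewOfUpper a) i j
  have hdiag (i : ι) : B i i = 0 := by simp [hB, mul_diagonal, skewOfUpper_apply_self]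
  calc (B * B).trace = ∑ p : ι × ι, B p.1 p.2 * B p.2 p.1 := by
        simp [trace, mul_apply, Fintype.sum_prod_type]
    _ = ∑ p ∈ univ.offDiag, B p.1 p.2 * B p.2 p.1 := by
        refine (sum_subset (subset_univ _) ?_).symm
        rintro ⟨i, j⟩ - hij
        obtain rfl : i = j := by simpa using hij
        simp [hdiag]
    _ = _ := by
        rw [← sum_lt_add_swap fun i j ↦ B i j * B j i, mul_sum]
        refine sum_congr rfl fun p _ ↦ ?_
        simp only [hB, mul_diagonal, hskew p.1.1 p.1.2, skewOfUpper_apply_of_lt a p.2]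
        ring

end SkewMatrices

lemma exists_transpose_mul_mul_eq_diagonal {K ι : Type*} [Field K] [Fintype ι] [DecidableEq ι]
    (h2 : (2 : K) ≠ 0) {J : Matrix ι ι K} (hJ : J.IsSymm) :
    ∃ (P : Matrix ι ι K) (d : ι → K), IsUnit P ∧ Pᵀ * J * P = diagonal d := by
  have : Invertible (2 : K) := invertibleOfNonzero h2
  let b := Pi.basisFun K ι
  let B : LinearMap.BilinForm K (ι → K) := toBilin b J
  obtain ⟨v, hv⟩ := LinearMap.BilinForm.exists_orthogonal_basis (B := B)
    (LinearMap.BilinForm.isSymm_iff.1 ((isSymm_toBilin_iff_isSymm b).2 hJ))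
  let e : Fin (Module.finrank K (ι → K)) ≃ ι := Fintype.equivOfCardEq (by simp)
  let w := v.reindex e
  have hdiag : (B.toMatrix w).IsDiag := fun i j hij ↦ by
    simpa [w, LinearMap.BilinForm.toMatrix_apply] using
      LinearMap.isOrthoᵢ_def.1 hv _ _ (e.symm.injective.ne hij)
  have := b.invertibleToMatrix w
  refine ⟨b.toMatrix w, (B.toMatrix w).diag, isUnit_of_invertible _, ?_⟩
  rw [hdiag.diagonal_diag, ← LinearMap.BilinForm.toMatrix_mul_basis_toMatrix b,
    LinearMap.BilinForm.toMatrix_toBilin]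

section SkewGaussSum

variable {F R ι : Type*} [Field F] [Fintype F] [DecidableEq F] [Fintype ι]

/-- The Gauss sum of the quadratic form `A ↦ tr((AJ)²) / 2` on the skew-symmetric matrices. For
symmetric invertible `J`, right multiplication by `J` identifies it with the form `X ↦ tr(X²) / 2`
on the orthogonal Lie algebra of `J`. -/
def skewGaussSum [DecidableEq ι] [CommRing R] (ψ : AddChar F R) (J : Matrix ι ι F) : R :=
  ∑ A : {A : Matrix ι ι F // Aᵀ = -A}, ψ ((A.1 * J * (A.1 * J)).trace / 2)

variable [DecidableEq ι]

lemma sum_so_eq_skewGaussSum [CommRing R] (ψ : AddChar F R) {J : Matrix ι ι F}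
    (hJsymm : J.IsSymm) (hJ : IsUnit J) :
    ∑ X : {X : Matrix ι ι F // Xᵀ * J + J * X = 0}, ψ ((X.1 * X.1).trace / 2) =
      skewGaussSum ψ J := by
  refine (Fintype.sum_equiv (hJ.unit.mulRight.subtypeEquiv fun A ↦ ?_) _ _ fun A ↦ rfl).symm
  exact (transpose_mul_add_mul_eq_zero_iff hJsymm hJ A).symm

lemma skewGaussSum_congr [CommRing R] (ψ : AddChar F R) (J : Matrix ι ι F)
    {P : Matrix ι ι F} (hP : IsUnit P) : skewGaussSum ψ (Pᵀ * J * P) = skewGaussSum ψ J := by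
  have hPT : IsUnit Pᵀ := P.isUnit_transpose.2 hP
  refine Fintype.sum_equiv ((hP.unit.mulLeft.trans hPT.unit.mulRight).subtypeEquiv fun A ↦ ?_)
    _ _ fun A ↦ ?_
  · exact (transpose_mul_mul_transpose_eq_neg_iff hP A).symm
  · congr 2
    calc (A.1 * (Pᵀ * J * P) * (A.1 * (Pᵀ * J * P))).trace
        = (A.1 * Pᵀ * J * P * A.1 * Pᵀ * J * P).trace := by simp only [mul_assoc]
      _ = (P * A.1 * Pᵀ * J * (P * A.1 * Pᵀ * J)).trace := by
        rw [trace_mul_comm]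
        simp only [mul_assoc]

lemma skewGaussSum_diagonal {ι : Type*} [Fintype ι] [LinearOrder ι] [CommRing R] [IsDomain R]
    {ψ : AddChar F R} (hF : ringChar F ≠ 2) (hψ : ψ ≠ 1) {d : ι → F} (hd : ∀ i, d i ≠ 0) :
    skewGaussSum ψ (diagonal d) =
      (quadraticChar F (-1) * ∑ x, ψ (x ^ 2)) ^ (Fintype.card ι).choose 2 *
        (quadraticChar F (∏ i, d i) : R) ^ (Fintype.card ι - 1) := by
  have h2 : (2 : F) ≠ 0 := Ring.two_ne_zero hF
  have hw (p : {p : ι × ι // p.1 < p.2}) : -(d p.1.1 * d p.1.2) ≠ 0 := by simp [hd]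
  calc skewGaussSum ψ (diagonal d)
      = ∑ a : {p : ι × ι // p.1 < p.2} → F, ψ (∑ p, -(d p.1.1 * d p.1.2) * a p ^ 2) := by
        rw [skewGaussSum, ← (skewEquiv h2).sum_comp]
        simp only [skewEquiv, Equiv.coe_fn_mk, trace_sq_skewOfUpper_mul_diagonal,
          mul_div_cancel_left₀ _ h2]
    _ = _ := by
        rw [sum_addChar_weightedSumSquares hF hψ hw, prod_neg, prod_lt_mul, card_univ,
          card_lt_pairs]
        push_cast [map_mul, map_pow]
        ring

lemma skewGaussSum_eq [CommRing R] [IsDomain R] {ψ : AddChar F R} (hF : ringChar F ≠ 2)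
    (hψ : ψ ≠ 1) {J : Matrix ι ι F} (hJsymm : J.IsSymm) (hJ : IsUnit J) :
    skewGaussSum ψ J =
      (quadraticChar F (-1) * ∑ x, ψ (x ^ 2)) ^ (Fintype.card ι).choose 2 *
        (quadraticChar F J.det : R) ^ (Fintype.card ι - 1) := by
  obtain ⟨P, d, hP, hPJ⟩ := exists_transpose_mul_mul_eq_diagonal (Ring.two_ne_zero hF) hJsymm
  have hPdet : P.det ≠ 0 := (P.isUnit_iff_isUnit_det.1 hP).ne_zero
  have hprod : ∏ i, d i = P.det ^ 2 * J.det := by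
    rw [← det_diagonal, ← hPJ, det_mul, det_mul, det_transpose]
    ring
  have hd : ∀ i, d i ≠ 0 := by
    have hprod_ne : ∏ i, d i ≠ 0 :=
      hprod ▸ mul_ne_zero (pow_ne_zero 2 hPdet) (J.isUnit_iff_isUnit_det.1 hJ).ne_zero
    exact fun i ↦ prod_ne_zero_iff.1 hprod_ne i (mem_univ i)
  obtain ⟨_⟩ : Nonempty (LinearOrder ι) := ⟨IsWellOrder.linearOrder WellOrderingRel⟩
  obtain rfl : ‹DecidableEq ι› = LinearOrder.toDecidableEq := Subsingleton.elim _ _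
  rw [← skewGaussSum_congr ψ J hP, hPJ, skewGaussSum_diagonal hF hψ hd, hprod, map_mul,
    quadraticChar_sq_one' hPdet, one_mul]

lemma skewGaussSum_of_card_eq_two_mul [CommRing R] [IsDomain R] {ψ : AddChar F R}
    (hF : ringChar F ≠ 2) (hψ : ψ ≠ 1) {J : Matrix ι ι F} (hJsymm : J.IsSymm) (hJ : IsUnit J)
    {n : ℕ} (hn : Fintype.card ι = 2 * n) :
    skewGaussSum ψ J =
      (quadraticChar F (-1) * ∑ x, ψ (x ^ 2)) ^ (n * (2 * n - 1)) * quadraticChar F J.det := by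
  have hchoose : (2 * n).choose 2 = n * (2 * n - 1) := by
    rw [Nat.choose_two_right, mul_assoc, Nat.mul_div_cancel_left _ two_pos]
  have hdet : (quadraticChar F J.det : R) ^ (2 * n - 1) = quadraticChar F J.det := by
    obtain rfl | ⟨m, rfl⟩ : n = 0 ∨ ∃ m, n = m + 1 := by cases n <;> simp
    · have : IsEmpty ι := Fintype.card_eq_zero_iff.1 hn
      simp
    · have hsq : (quadraticChar F J.det : R) ^ 2 = 1 :=
        intCast_quadraticChar_sq R (J.isUnit_iff_isUnit_det.1 hJ).ne_zero
      rw [show 2 * (m + 1) - 1 = 2 * m + 1 by lia, pow_succ, pow_mul, hsq, one_pow, one_mul]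
  rw [skewGaussSum_eq hF hψ hJsymm hJ, hn, hchoose, hdet]

end SkewGaussSum

lemma normalized_sum_addChar_sq_sq {F : Type*} [Field F] [Fintype F] [DecidableEq F]
    (hF : ringChar F ≠ 2) {ψ : AddChar F ℂ} (hψ : ψ ≠ 1) :
    ((Real.sqrt (Fintype.card F) : ℂ)⁻¹ * ∑ x, ψ (x ^ 2)) ^ 2 = quadraticChar F (-1) := by
  have hsqrt : (Real.sqrt (Fintype.card F) : ℂ) ^ 2 = Fintype.card F := by
    exact_mod_cast Real.sq_sqrt (Nat.cast_nonneg (Fintype.card F))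
  have hcard : (Fintype.card F : ℂ) ≠ 0 := Nat.cast_ne_zero.2 Fintype.card_ne_zero
  rw [mul_pow, inv_pow, hsqrt, sum_addChar_sq_sq hF (by simp) hψ]
  field_simp

lemma mul_two_mul_sub_one_modEq_four (n : ℕ) : n * (2 * n - 1) ≡ n [MOD 4] := by
  obtain _ | m := n
  · rfl
  obtain ⟨k, hk⟩ := (Nat.even_mul_succ_self m).two_dvd
  have hsum : (m + 1) * (2 * (m + 1) - 1) = m + 1 + 4 * k := by
    rw [show 2 * (m + 1) - 1 = 2 * m + 1 by lia]
    linear_combination 2 * hk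
  rw [hsum]
  exact Nat.add_modulus_mul_modEq_iff.2 rfl

theorem weilIndex_so_nonsplit_general {F ι : Type*} [Field F] [Fintype F] [DecidableEq F]
    [Fintype ι] [DecidableEq ι] (hq : Odd (Fintype.card F))
    {n : ℕ} (hn : Fintype.card ι = 2 * n) {J : Matrix ι ι F}
    (hJsymm : J.IsSymm) (hJinv : IsUnit J) {ψ : AddChar F ℂ} (hψ : ψ ≠ 1) :
    ((Real.sqrt (Fintype.card F) : ℂ))⁻¹ ^ (n * (2 * n - 1)) *
        ∑ X : {X : Matrix ι ι F // Xᵀ * J + J * X = 0}, ψ ((X.1 * X.1).trace / 2) =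
      quadraticChar F ((-1) ^ n * J.det) *
        (((Real.sqrt (Fintype.card F) : ℂ))⁻¹ * ∑ x : F, ψ (x ^ 2)) ^ n := by
  have hF : ringChar F ≠ 2 := fun h ↦
    Nat.not_even_iff_odd.2 hq (Nat.even_iff.2 (FiniteField.even_card_of_char_two h))
  rw [sum_so_eq_skewGaussSum ψ hJsymm hJinv,
    skewGaussSum_of_card_eq_two_mul hF hψ hJsymm hJinv hn]
  set s := (Real.sqrt (Fintype.card F) : ℂ)
  set G := ∑ x, ψ (x ^ 2)
  set c := ((quadraticChar F (-1) : ℤ) : ℂ) with hc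
  have hc_sq : c ^ 2 = 1 := intCast_quadraticChar_sq ℂ (neg_ne_zero.2 one_ne_zero)
  have hε_sq : (s⁻¹ * G) ^ 2 = c := normalized_sum_addChar_sq_sq hF hψ
  have hpow : (c * (s⁻¹ * G)) ^ 4 = 1 := by
    rw [mul_pow, pow_mul c 2 2, pow_mul (s⁻¹ * G) 2 2, hc_sq, hε_sq, hc_sq, one_pow, one_mul]
  calc s⁻¹ ^ (n * (2 * n - 1)) * ((c * G) ^ (n * (2 * n - 1)) * quadraticChar F J.det)
      = (c * (s⁻¹ * G)) ^ (n * (2 * n - 1)) * quadraticChar F J.det := by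
        simp only [mul_pow]
        ring
    _ = (c * (s⁻¹ * G)) ^ n * quadraticChar F J.det := by
        rw [pow_eq_pow_of_modEq (mul_two_mul_sub_one_modEq_four n) hpow]
    _ = quadraticChar F ((-1) ^ n * J.det) * (s⁻¹ * G) ^ n := by
        push_cast [map_mul, map_pow, ← hc]
        ring

/-- The Weil index of the non-split quasi-split even orthogonal Lie algebra with the trace
pairing equals `-ε(ψ)^n`: if `J ∈ M_{2n}(F)` is symmetric invertible with
`χ((-1)^n det J) = -1`, then `q^{-n(2n-1)/2} ∑_{X ∈ so_J(2n,F)} ψ(tr(X²)/2) = -ε(ψ)^n`. -/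
theorem weilIndex_so_nonsplit {F : Type*} [Field F] [Fintype F] [DecidableEq F]
    (hq : Odd (Fintype.card F))
    (n : ℕ) (hn : 1 ≤ n)
    (J : Matrix (Fin (2 * n)) (Fin (2 * n)) F)
    (hJsymm : J.IsSymm) (hJinv : IsUnit J)
    (hJ : quadraticChar F ((-1) ^ n * J.det) = -1)
    (ψ : AddChar F ℂ) (hψ : ψ ≠ 1) :
    ((Real.sqrt (Fintype.card F) : ℂ))⁻¹ ^ (n * (2 * n - 1)) *
        ∑ X : {X : Matrix (Fin (2 * n)) (Fin (2 * n)) F // Xᵀ * J + J * X = 0},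
          ψ ((X.1 * X.1).trace / 2) =
      -(((Real.sqrt (Fintype.card F) : ℂ))⁻¹ * ∑ x : F, ψ (x ^ 2)) ^ n := by
  rw [weilIndex_so_nonsplit_general hq (Fintype.card_fin _) hJsymm hJinv hψ, hJ]
  simp
end

section
/- Let F be a finite field of odd cardinality q and ψ : F → ℂ a nontrivial additive character. Then q^{-2} ∑_{(x₁,x₂,x₃,x₄) ∈ F⁴} ψ(x₁² − x₁x₂ + x₂² − 2x₂x₃ + 2x₃² − 2x₃x₄ + 2x₄²) = 1. (This is the Weil index γ(F₄) = 1 computed from the symmetrized Cartan matrix [[2,−1,0,0],[−1,2,−2,0],[0,−2,4,−2],[0,0,−2,4]] of type F₄.) -/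
open Finset

/-!
Let `G(ψ) = ∑ ψ(x²)` be the quadratic Gauss sum. As soon as `2` is invertible, the form of type `F₄`
is equivalent to a sum of four squares, so its character sum is `G(ψ)⁴`.
Completing the square gives `G(ψ) G(ψ⁻¹) = q`. Writing `-1 = c² + d²`, the matrix
`[[c, d], [d, -c]]` carries `x² + y²` to `-(x² + y²)`, so `G(ψ)² = G(ψ⁻¹)²`, and hence
`G(ψ)⁴ = (G(ψ) G(ψ⁻¹))² = q²`.

The argument works over any finite commutative ring of odd order `q`. There `-1` is a sum of two
squares because Dirichlet's theorem supplies a prime `p` with `p ≡ 1 mod 4` and `p ≡ -1 mod q`,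
and `p` is a sum of two squares by Fermat.
-/

section OddOrder

theorem exists_dvd_sq_add_sq_add_one {n : ℕ} (hn : Odd n) :
    ∃ a b : ℕ, n ∣ a ^ 2 + b ^ 2 + 1 := by
  obtain ⟨k, rfl⟩ := hn
  -- `2n - 1` is `1` modulo `4` and `-1` modulo `n`; here `n = 2k + 1`.
  have hcop : (4 * k + 1).Coprime (4 * (2 * k + 1)) := by
    refine Nat.isCoprime_iff_coprime.mp ⟨4 * k + 1, -(2 * k : ℤ), ?_⟩
    push_cast
    ring
  obtain ⟨p, -, hp, hpmod⟩ := Nat.forall_exists_prime_gt_and_modEq 0 (by lia) hcop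
  have hp_mod_four : p ≡ 4 * k + 1 [MOD 4] := hpmod.of_mul_right _
  have hdvd : 2 * k + 1 ∣ p + 1 := by
    have hmod : p + 1 ≡ 2 * (2 * k + 1) [MOD 2 * k + 1] := by
      convert (hpmod.of_mul_left 4).add_right 1 using 1
      ring
    exact (hmod.dvd_iff dvd_rfl).mpr (dvd_mul_left _ _)
  have := Fact.mk hp
  obtain ⟨a, b, hab⟩ := Nat.Prime.sq_add_sq (p := p) (by unfold Nat.ModEq at hp_mod_four; lia)
  exact ⟨a, b, hab ▸ hdvd⟩

variable {R : Type*} [CommRing R] [Fintype R]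

theorem exists_sq_add_sq_eq_neg_one (hR : Odd (Fintype.card R)) :
    ∃ c d : R, c ^ 2 + d ^ 2 = -1 := by
  obtain ⟨a, b, hab⟩ := exists_dvd_sq_add_sq_add_one hR
  refine ⟨a, b, eq_neg_of_add_eq_zero_left ?_⟩
  exact_mod_cast zero_dvd_iff.mp (Nat.cast_card_eq_zero R ▸ Nat.cast_dvd_cast (α := R) hab)

theorem isUnit_two_of_odd_card (hR : Odd (Fintype.card R)) : IsUnit (2 : R) := by
  obtain ⟨k, hk⟩ := hR
  have hzero : (2 * k + 1 : R) = 0 := by exact_mod_cast hk ▸ Nat.cast_card_eq_zero R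
  exact .of_mul_eq_one (-k) (by linear_combination -hzero)

end OddOrder

theorem sum_comp_mulVec {ι R M : Type*} [Fintype ι] [DecidableEq ι] [CommRing R] [Fintype R]
    [AddCommMonoid M] {A : Matrix ι ι R} (hA : IsUnit A.det) (f : (ι → R) → M) :
    ∑ x, f (A.mulVec x) = ∑ x, f x :=
  (Finite.injective_iff_bijective.mp <|
    Matrix.mulVec_injective_of_isUnit <| A.isUnit_iff_isUnit_det.mpr hA).sum_comp f

theorem addChar_map_sum_eq_prod {ι A M : Type*} [AddCommMonoid A] [CommMonoid M]
    (ψ : AddChar A M) (s : Finset ι) (f : ι → A) : ψ (∑ i ∈ s, f i) = ∏ i ∈ s, ψ (f i) :=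
  map_prod ψ.toMonoidHom (fun i ↦ Multiplicative.ofAdd (f i)) s

section GaussSum

variable {R S T : Type*} [CommRing R] [Fintype R] [CommSemiring S] [CommRing T] [IsDomain T]

/-- The quadratic Gauss sum `∑ ψ(x²)` of an additive character `ψ` of a finite ring. It is summed
over squares, rather than defined as the `gaussSum` of the quadratic character, because the latter
is available only over fields. -/
def quadraticGaussSum (ψ : AddChar R S) : S :=
  ∑ x, ψ (x ^ 2)

theorem quadraticGaussSum_pow (ψ : AddChar R S) (n : ℕ) :
    quadraticGaussSum ψ ^ n = ∑ x : Fin n → R, ψ (∑ i, x i ^ 2) := by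
  simp only [quadraticGaussSum, Fintype.sum_pow, addChar_map_sum_eq_prod]

theorem quadraticGaussSum_mulShift_sq (ψ : AddChar R S) {c d : R} (hcd : IsUnit (c ^ 2 + d ^ 2)) :
    quadraticGaussSum (ψ.mulShift (c ^ 2 + d ^ 2)) ^ 2 = quadraticGaussSum ψ ^ 2 := by
  have hdet : IsUnit (!![c, d; d, -c] : Matrix (Fin 2) (Fin 2) R).det := by
    convert hcd.neg using 1
    rw [Matrix.det_fin_two_of]
    ring
  symm
  simp only [quadraticGaussSum_pow, AddChar.mulShift_apply]
  rw [← sum_comp_mulVec hdet]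
  refine sum_congr rfl fun x _ ↦ congrArg ψ ?_
  simp only [Matrix.mulVec, dotProduct, Matrix.of_apply, Matrix.cons_val', Matrix.cons_val_fin_one,
    Matrix.cons_val_zero, Matrix.cons_val_one, Fin.sum_univ_two]
  ring

theorem quadraticGaussSum_mul_quadraticGaussSum_inv {ψ : AddChar R T}
    (hψ : ψ.IsPrimitive) (h2 : IsUnit (2 : R)) :
    quadraticGaussSum ψ * quadraticGaussSum ψ⁻¹ = Fintype.card R := by
  classical
  calc
    quadraticGaussSum ψ * quadraticGaussSum ψ⁻¹ = ∑ y, ∑ x, ψ (x ^ 2 - y ^ 2) := by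
      simp only [quadraticGaussSum, sum_mul_sum, AddChar.inv_apply, ← AddChar.map_add_eq_mul,
        ← sub_eq_add_neg]
      exact sum_comm
    _ = ∑ y, ∑ x, ψ ((x + y) ^ 2 - y ^ 2) :=
      sum_congr rfl fun y _ ↦ (Equiv.sum_comp (Equiv.addRight y) fun x ↦ ψ (x ^ 2 - y ^ 2)).symm
    _ = ∑ x, ψ (x ^ 2) * ∑ y, ψ (y * (2 * x)) := by
      simp only [mul_sum, ← AddChar.map_add_eq_mul]
      rw [sum_comm]
      refine sum_congr rfl fun x _ ↦ sum_congr rfl fun y _ ↦ congrArg ψ ?_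
      ring
    _ = Fintype.card R := by
      simp [AddChar.sum_mulShift _ hψ, h2.mul_right_eq_zero]

theorem quadraticGaussSum_pow_four {ψ : AddChar R T} (hψ : ψ.IsPrimitive)
    (hR : Odd (Fintype.card R)) : quadraticGaussSum ψ ^ 4 = (Fintype.card R : T) ^ 2 := by
  obtain ⟨c, d, hcd⟩ := exists_sq_add_sq_eq_neg_one hR
  have hinv : quadraticGaussSum ψ⁻¹ ^ 2 = quadraticGaussSum ψ ^ 2 := by
    rw [AddChar.inv_mulShift, ← hcd]
    exact quadraticGaussSum_mulShift_sq ψ (hcd ▸ isUnit_one.neg)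
  calc
    quadraticGaussSum ψ ^ 4 = quadraticGaussSum ψ ^ 2 * quadraticGaussSum ψ⁻¹ ^ 2 := by
      rw [hinv]
      ring
    _ = (Fintype.card R : T) ^ 2 := by
      rw [← mul_pow, quadraticGaussSum_mul_quadraticGaussSum_inv hψ (isUnit_two_of_odd_card hR)]

theorem sum_F4_eq_quadraticGaussSum_pow_four (ψ : AddChar R S) (h2 : IsUnit (2 : R)) :
    ∑ x : Fin 4 → R,
      ψ (x 0 ^ 2 - x 0 * x 1 + x 1 ^ 2 - 2 * x 1 * x 2 + 2 * x 2 ^ 2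
          - 2 * x 2 * x 3 + 2 * x 3 ^ 2) = quadraticGaussSum ψ ^ 4 := by
  let A : Matrix (Fin 4) (Fin 4) R := !![2, 0, 0, 0; 3, 1, 1, 1; 2, 1, 1, 0; 1, 1, 0, 0]
  have hdet : IsUnit A.det := by
    convert h2.neg using 1
    simp [A, Matrix.det_succ_row_zero, Fin.sum_univ_succ, Fin.succAbove]
  rw [quadraticGaussSum_pow, ← sum_comp_mulVec hdet]
  refine sum_congr rfl fun y _ ↦ congrArg ψ ?_
  simp only [A, Matrix.mulVec, dotProduct, Matrix.of_apply, Matrix.cons_val', Matrix.cons_val,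
    Fin.sum_univ_four]
  ring

theorem weilIndex_F4_general (hR : Odd (Fintype.card R)) {ψ : AddChar R T}
    (hψ : ψ.IsPrimitive) :
    ∑ x : Fin 4 → R,
      ψ (x 0 ^ 2 - x 0 * x 1 + x 1 ^ 2 - 2 * x 1 * x 2 + 2 * x 2 ^ 2
          - 2 * x 2 * x 3 + 2 * x 3 ^ 2) = (Fintype.card R : T) ^ 2 := by
  rw [sum_F4_eq_quadraticGaussSum_pow_four ψ (isUnit_two_of_odd_card hR),
    quadraticGaussSum_pow_four hψ hR]

end GaussSum

/-- The Weil index of type `F₄`: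
`q⁻² ∑_{x ∈ F⁴} ψ(x₁² - x₁x₂ + x₂² - 2x₂x₃ + 2x₃² - 2x₃x₄ + 2x₄²) = 1`. -/
theorem weilIndex_F4 {F : Type*} [Field F] [Fintype F]
    (hq : Odd (Fintype.card F))
    (ψ : AddChar F ℂ) (hψ : ψ ≠ 1) :
    ((Fintype.card F : ℂ) ^ 2)⁻¹ *
        ∑ x : Fin 4 → F,
          ψ (x 0 ^ 2 - x 0 * x 1 + x 1 ^ 2 - 2 * x 1 * x 2 + 2 * x 2 ^ 2
              - 2 * x 2 * x 3 + 2 * x 3 ^ 2) = 1 := by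
  rw [weilIndex_F4_general hq (.of_ne_one hψ)]
  exact inv_mul_cancel₀ (pow_ne_zero 2 (Nat.cast_ne_zero.mpr Fintype.card_ne_zero))
end
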